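/- arXiv:2304.02304 — 2 statements merged into one kernel-verified Lean document; each statement's English description precedes it below -/
import Mathlib

section
/- (Proposition 3.4) There is no ρ-invariant subspace of ℂ⁶ of dimension 4 if and only if λ₁³ ≠ q². -/
open Matrix Polynomial

noncomputable def M1 (q l : ℂ) : Matrix (Fin 6) (Fin 6) ℂ :=
  !![q, -q^2*l, q^2, q^2, -q^2/l, 1;
     0, l,      q^2, 0,   1/l,    1;
     0, 0,      q^2, 0,   0,      1;
     0, 0,      0,   q^2, -q^2/l, 1;
     0, 0,      0,   0,   1/l,    1;
     0, 0,      0,   0,   0,      1]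

noncomputable def M2 (q l : ℂ) : Matrix (Fin 6) (Fin 6) ℂ :=
  !![1,    0,    0,   0,   0,   0;
     -1/l, 1/l,  0,   0,   0,   0;
     q,    1,    q^2, 0,   0,   0;
     -q^2, 0,    0,   q^2, 0,   0;
     l,    -l,   0,   -l,  l,   0;
     -1,   -q^2, -q,  1,   q^2, q]

/-- A subspace `W ⊆ ℂ⁶` is ρ-invariant if it is mapped into itself by both `M1` and `M2`
(acting on column vectors). -/
def RhoInvariant (q l : ℂ) (W : Submodule ℂ (Fin 6 → ℂ)) : Prop :=
  (∀ x ∈ W, (M1 q l).mulVec x ∈ W) ∧ (∀ x ∈ W, (M2 q l).mulVec x ∈ W)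

/-- Row vectors times `M1`, in coordinates. -/
theorem vm1 (q l a b c d e f : ℂ) :
    ![a, b, c, d, e, f] ᵥ* M1 q l =
      ![q * a, -q^2 * l * a + l * b, q^2 * (a + b + c), q^2 * (a + d),
        (-q^2 * a + b - q^2 * d + e) / l, a + b + c + d + e + f] := by
  ext i
  fin_cases i <;> simp [M1, Matrix.vecMul, dotProduct, Fin.sum_univ_succ] <;> ring

/-- Row vectors times `M2`, in coordinates. -/
theorem vm2 (q l a b c d e f : ℂ) :
    ![a, b, c, d, e, f] ᵥ* M2 q l =
      ![a - b / l + q * c - q^2 * d + l * e - f, b / l + c - l * e - q^2 * f,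
        q^2 * c - q * f, q^2 * d - l * e + f, l * e + q^2 * f, q * f] := by
  ext i
  fin_cases i <;> simp [M2, Matrix.vecMul, dotProduct, Fin.sum_univ_succ] <;> ring

/-- Any three vectors of a plane have vanishing `3 × 3` minors. -/
theorem minor_zero (U : Submodule ℂ (Fin 6 → ℂ)) (hU : Module.finrank ℂ U = 2)
    (x y z : Fin 6 → ℂ) (hx : x ∈ U) (hy : y ∈ U) (hz : z ∈ U) (i j k : Fin 6) :
    x i * (y j * z k - y k * z j) - x j * (y i * z k - y k * z i)
      + x k * (y i * z j - y j * z i) = 0 := by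
  have hdep : ¬ LinearIndependent ℂ (![⟨x, hx⟩, ⟨y, hy⟩, ⟨z, hz⟩] : Fin 3 → U) := by
    intro h
    have := h.fintype_card_le_finrank
    simp [hU] at this
  rw [Fintype.not_linearIndependent_iff] at hdep
  obtain ⟨g, hg, m, hm⟩ := hdep
  have hg' : ∀ n : Fin 6, g 0 * x n + g 1 * y n + g 2 * z n = 0 := by
    intro n
    have := congrArg (fun w : U => (w : Fin 6 → ℂ) n) hg
    simpa [Fin.sum_univ_succ, add_assoc] using this
  have hi := hg' i
  have hj := hg' j
  have hk := hg' k
  have key : ∀ m : Fin 3, g m * (x i * (y j * z k - y k * z j)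
      - x j * (y i * z k - y k * z i) + x k * (y i * z j - y j * z i)) = 0 := by
    intro m
    fin_cases m
    · change g 0 * _ = 0
      linear_combination (y j * z k - y k * z j) * hi - (y i * z k - y k * z i) * hj
        + (y i * z j - y j * z i) * hk
    · change g 1 * _ = 0
      linear_combination (x k * z j - x j * z k) * hi + (x i * z k - x k * z i) * hj
        + (x j * z i - x i * z j) * hk
    · change g 2 * _ = 0
      linear_combination (x j * y k - x k * y j) * hi + (x k * y i - x i * y k) * hj
        + (x i * y j - x j * y i) * hk
  exact (mul_eq_zero.mp (key m)).resolve_left hm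

/-- The minors of `v, v M2, v M2 M1` vanish for `v` in an invariant plane (rows). -/
theorem minorA (q l : ℂ) (U : Submodule ℂ (Fin 6 → ℂ)) (hU : Module.finrank ℂ U = 2)
    (hA : ∀ x ∈ U, x ᵥ* M1 q l ∈ U) (hB : ∀ x ∈ U, x ᵥ* M2 q l ∈ U)
    (v : Fin 6 → ℂ) (hv : v ∈ U) (i j k : Fin 6) :
    v i * ((v ᵥ* M2 q l) j * ((v ᵥ* M2 q l) ᵥ* M1 q l) k - (v ᵥ* M2 q l) k * ((v ᵥ* M2 q l) ᵥ* M1 q l) j)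
      - v j * ((v ᵥ* M2 q l) i * ((v ᵥ* M2 q l) ᵥ* M1 q l) k - (v ᵥ* M2 q l) k * ((v ᵥ* M2 q l) ᵥ* M1 q l) i)
      + v k * ((v ᵥ* M2 q l) i * ((v ᵥ* M2 q l) ᵥ* M1 q l) j - (v ᵥ* M2 q l) j * ((v ᵥ* M2 q l) ᵥ* M1 q l) i) = 0 :=
  minor_zero U hU v (v ᵥ* M2 q l) ((v ᵥ* M2 q l) ᵥ* M1 q l) hv (hB v hv) (hA _ (hB v hv)) i j k

theorem minorB (q l : ℂ) (U : Submodule ℂ (Fin 6 → ℂ)) (hU : Module.finrank ℂ U = 2)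
    (hB : ∀ x ∈ U, x ᵥ* M2 q l ∈ U)
    (v : Fin 6 → ℂ) (hv : v ∈ U) (i j k : Fin 6) :
    v i * ((v ᵥ* M2 q l) j * ((v ᵥ* M2 q l) ᵥ* M2 q l) k - (v ᵥ* M2 q l) k * ((v ᵥ* M2 q l) ᵥ* M2 q l) j)
      - v j * ((v ᵥ* M2 q l) i * ((v ᵥ* M2 q l) ᵥ* M2 q l) k - (v ᵥ* M2 q l) k * ((v ᵥ* M2 q l) ᵥ* M2 q l) i)
      + v k * ((v ᵥ* M2 q l) i * ((v ᵥ* M2 q l) ᵥ* M2 q l) j - (v ᵥ* M2 q l) j * ((v ᵥ* M2 q l) ᵥ* M2 q l) i) = 0 :=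
  minor_zero U hU v (v ᵥ* M2 q l) ((v ᵥ* M2 q l) ᵥ* M2 q l) hv (hB v hv) (hB _ (hB v hv)) i j k

theorem case_one (q l : ℂ) (U : Submodule ℂ (Fin 6 → ℂ)) (hqq : q^2 + q + 1 = 0) (hl0 : l ≠ 0)
    (hU : Module.finrank ℂ U = 2)
    (hA : ∀ x ∈ U, x ᵥ* M1 q l ∈ U) (hB : ∀ x ∈ U, x ᵥ* M2 q l ∈ U)
    (hv : ![0, 0, 0, 0, 0, 1] ∈ U) : False := by
  have k : (1 : ℂ) = 0 := by
    have h := minorA q l U hU hA hB _ hv 0 1 5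
    simp [-mul_eq_zero, vm1, vm2] at h
    clear * - h hqq hl0
    field_simp at h
    grind
  exact one_ne_zero k

theorem case_linv (q l : ℂ) (U : Submodule ℂ (Fin 6 → ℂ)) (hqq : q^2 + q + 1 = 0) (hl0 : l ≠ 0)
    (hU : Module.finrank ℂ U = 2)
    (hA : ∀ x ∈ U, x ᵥ* M1 q l ∈ U) (hB : ∀ x ∈ U, x ᵥ* M2 q l ∈ U)
    (hv : ![0, 0, 0, 0, 1 - l, l] ∈ U) : False := by
  have k : l^4 = 0 := by
    have h := minorA q l U hU hA hB _ hv 0 2 5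
    simp [-mul_eq_zero, vm1, vm2] at h
    clear * - h hqq hl0
    field_simp at h
    grind
  simp [hl0] at k

theorem case_q2 (q l : ℂ) (U : Submodule ℂ (Fin 6 → ℂ)) (hqq : q^2 + q + 1 = 0) (hl0 : l ≠ 0)
    (hU : Module.finrank ℂ U = 2)
    (hA : ∀ x ∈ U, x ᵥ* M1 q l ∈ U) (hB : ∀ x ∈ U, x ᵥ* M2 q l ∈ U)
    (hl3 : l^3 ≠ q^2) (a s : ℂ) (has : a ≠ 0 ∨ s ≠ 0)
    (hv : ![0, 0, a * (q^2 - 1), s * (q - l) * (q^2 - 1), s * (q^2 - 1),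
      a + s * (q - l) + s] ∈ U) : False := by
  have k1 : a * (a^2 + a*s*(1+q^2*l) + s^2*(1-q^2*l+q*l^2)) = 0 := by
    have h := minorA q l U hU hA hB _ hv 0 1 2
    simp [-mul_eq_zero, vm1, vm2] at h
    clear * - h hqq hl0
    field_simp at h
    grind
  have k2 : s * (a^2 + a*s*(1+q^2*l) + s^2*(1-q^2*l+q*l^2)) = 0 := by
    have h := minorA q l U hU hA hB _ hv 0 1 4
    simp [-mul_eq_zero, vm1, vm2] at h
    clear * - h hqq hl0
    field_simp at h
    grind
  have hQ : a^2 + a*s*(1+q^2*l) + s^2*(1-q^2*l+q*l^2) = 0 := by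
    rcases has with h | h
    · exact (mul_eq_zero.mp k1).resolve_left h
    · exact (mul_eq_zero.mp k2).resolve_left h
  have hs : s ≠ 0 := by
    rintro rfl
    simp at hQ has
    exact has hQ
  have hf : (a - q*(1+l)*s) * (a - (q^2+l)*s) = 0 := by
    clear * - hQ hqq
    grind
  rcases mul_eq_zero.mp hf with h | h
  · have ha : a = q*(1+l)*s := by linear_combination h
    subst ha
    have k : l * s^3 = 0 := by
      have h := minorA q l U hU hA hB _ hv 1 2 4
      simp [-mul_eq_zero, vm1, vm2] at h
      clear * - h hqq hl0
      field_simp at h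
      grind
    simp [hl0, hs] at k
  · have ha : a = (q^2+l)*s := by linear_combination h
    subst ha
    have k : (l^3 - q^2) * s^3 = 0 := by
      have h := minorA q l U hU hA hB _ hv 1 2 3
      simp [-mul_eq_zero, vm1, vm2] at h
      clear * - h hqq hl0
      field_simp at h
      grind
    simp [hs, sub_eq_zero, hl3] at k

theorem case_l (q l : ℂ) (U : Submodule ℂ (Fin 6 → ℂ)) (hqq : q^2 + q + 1 = 0) (hl0 : l ≠ 0)
    (hU : Module.finrank ℂ U = 2)
    (hA : ∀ x ∈ U, x ᵥ* M1 q l ∈ U) (hB : ∀ x ∈ U, x ᵥ* M2 q l ∈ U)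
    (hl3 : l^3 ≠ q^2) (hm1 : l ≠ -1) (h1 : l ≠ 1) (hq2 : l ≠ q^2)
    (hv : ![0, (l-1) * (l^2-1) * (l-q^2), q^2 * (l-1) * (l^2-1), 0, (l-1) * (l-q^2),
      l^3 - q^2] ∈ U) : False := by
  have n1 : l - 1 ≠ 0 := sub_ne_zero.mpr h1
  have n2 : l + 1 ≠ 0 := fun h => hm1 (by linear_combination h)
  have n3 : l - q^2 ≠ 0 := sub_ne_zero.mpr hq2
  have n4 : l^3 - q^2 ≠ 0 := sub_ne_zero.mpr hl3
  have k1 : (l+1) * (l-1)^3 * (l^3-q^2) * (l^3 - q) = 0 := by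
    have h := minorA q l U hU hA hB _ hv 1 2 3
    simp [-mul_eq_zero, vm1, vm2] at h
    clear * - h hqq hl0
    field_simp at h
    grind
  have k2 : (l+1) * (l-1)^2 * (l-q^2) * (l^3-q^2) * (-l^3 + q + (1-q)*(l^2+l)) = 0 := by
    have h := minorA q l U hU hA hB _ hv 0 1 3
    simp [-mul_eq_zero, vm1, vm2] at h
    clear * - h hqq hl0
    field_simp at h
    have hX : (l - 1) * ((l ^ 2 - 1) * (-(l - q ^ 2) + l * q ^ 3) + l ^ 2 * (l - q ^ 2))
        - l * (l ^ 3 - q ^ 2) = -(l^3 - q^2) := by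
      clear h
      grind
    have hY : (l - 1) * (l ^ 2 - 1) * q * (-(l - q ^ 2) + l * q ^ 3)
        - l * (-(l * (l - 1) * (l - q ^ 2)) + (l ^ 3 - q ^ 2))
        = q^2 * (-l^3 + q + (1-q)*(l^2+l)) := by
      clear h hX
      grind
    rw [hX, hY] at h
    have hq3 : q^3 = 1 := by linear_combination (q - 1) * hqq
    linear_combination -h - (l+1) * (l-1)^2 * (l-q^2) * (l^3-q^2) *
      (-l^3 + q + (1-q)*(l^2+l)) * hq3
  simp only [mul_eq_zero, pow_eq_zero_iff, n1, n2, n3, n4, false_or, ne_eq, OfNat.ofNat_ne_zero,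
    not_false_eq_true] at k1 k2
  have k3 : (1 - q) * l * (l + 1) = 0 := by linear_combination k2 + k1
  have hq1 : 1 - q ≠ 0 := by
    intro h
    clear * - h hqq
    grind
  simp [hq1, hl0, n2] at k3

theorem case_q (q l : ℂ) (U : Submodule ℂ (Fin 6 → ℂ)) (hqq : q^2 + q + 1 = 0) (hl0 : l ≠ 0)
    (hU : Module.finrank ℂ U = 2)
    (hA : ∀ x ∈ U, x ᵥ* M1 q l ∈ U) (hB : ∀ x ∈ U, x ᵥ* M2 q l ∈ U)
    (hm1 : l ≠ -1) (hq2 : l ≠ q^2)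
    (hv : ![(-2-q) * (1+l+l^2), q * (-2-q) * l * (q*l-1), 1 + (1-q)*l - q*l^2, 1+l+l^2,
      -q * (l-1), q*l] ∈ U) : False := by
  have n2 : l + 1 ≠ 0 := fun h => hm1 (by linear_combination h)
  have n3 : l - q^2 ≠ 0 := sub_ne_zero.mpr hq2
  have hy : ![-l, q+l, q^2 - l - l^2, q^2+q^2*l - l^2, -q^2*l - q*l^2, q^2*l] ∈ U := by
    have h := hB _ hv
    rw [vm2] at h
    convert h using 1
    clear * - hqq hl0
    ext i
    fin_cases i <;> simp <;> field_simp <;> grind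
  have hz : ![-q*l, q*l - q*l^2, -q^2*(1+l+l^2), q+(1+2*q)*l - q^2*l^2, (1-q)-(1+2*q)*l,
      -(2+q)*(1+l+l^2)] ∈ U := by
    have h := hA _ hy
    rw [vm1] at h
    convert h using 1
    clear * - hqq hl0
    ext i
    fin_cases i <;> simp <;> field_simp <;> grind
  have k1 : (l+1) * (l-q^2) *
      ((3+3*q)+(2+q)*l+(3-3*q)*l^2-(1+2*q)*l^3-(3+3*q)*l^4) = 0 := by
    have h := minor_zero U hU _ _ _ hv hy hz 0 1 2
    simp [-mul_eq_zero] at h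
    clear * - h hqq hl0
    grind
  have k2 : (l-q^2) * (l-q^2) *
      ((3+3*q)+(4+2*q)*l+(3-3*q)*l^2-(2+4*q)*l^3-(3+3*q)*l^4) = 0 := by
    have h := minor_zero U hU _ _ _ hv hy hz 0 1 3
    simp [-mul_eq_zero] at h
    clear * - h hqq hl0
    grind
  simp only [mul_eq_zero, n2, n3, false_or] at k1 k2
  have k3 : l * (l^2 + q) = 0 := by
    clear * - k1 k2 hqq
    grind
  have k4 : l^2 = -q := by
    linear_combination (mul_eq_zero.mp k3).resolve_left hl0
  have k5 : (1+2*q)*l = 2*q^2 := by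
    have h := minorB q l U hU hB _ hv 1 2 4
    simp [-mul_eq_zero, vm1, vm2] at h
    clear * - h hqq hl0 k4
    field_simp at h
    grind
  have k6 : (1+2*q)^2*l^2 = 4*q^4 := by linear_combination ((1+2*q)*l + 2*q^2) * k5
  rw [k4] at k6
  clear * - k6 hqq
  grind

/-- The plane of row vectors annihilating an invariant 4-space contains an eigenvector. -/
theorem exists_plane (q l : ℂ) (W : Submodule ℂ (Fin 6 → ℂ)) (hW : RhoInvariant q l W)
    (hd : Module.finrank ℂ W = 4) :
    ∃ U : Submodule ℂ (Fin 6 → ℂ), Module.finrank ℂ U = 2 ∧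
      (∀ x ∈ U, x ᵥ* M1 q l ∈ U) ∧ (∀ x ∈ U, x ᵥ* M2 q l ∈ U) := by
  let E := dotProductEquiv ℂ (Fin 6)
  refine ⟨W.dualAnnihilator.comap E.toLinearMap, ?_, ?_, ?_⟩
  · have h1 := Subspace.finrank_add_finrank_dualAnnihilator_eq W
    have h2 : Module.finrank ℂ (W.dualAnnihilator.comap E.toLinearMap)
        = Module.finrank ℂ W.dualAnnihilator := by
      rw [← LinearEquiv.finrank_map_eq E (W.dualAnnihilator.comap E.toLinearMap)]
      rw [Submodule.map_comap_eq_of_surjective E.surjective]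
    rw [h2]
    simp [hd] at h1
    omega
  · intro x hx
    rw [Submodule.mem_comap, Submodule.mem_dualAnnihilator] at hx ⊢
    intro w hw
    have := hx _ (hW.1 w hw)
    simp only [E, LinearEquiv.coe_coe, dotProductEquiv_apply_apply] at this ⊢
    rwa [← Matrix.dotProduct_mulVec]
  · intro x hx
    rw [Submodule.mem_comap, Submodule.mem_dualAnnihilator] at hx ⊢
    intro w hw
    have := hx _ (hW.2 w hw)
    simp only [E, LinearEquiv.coe_coe, dotProductEquiv_apply_apply] at this ⊢
    rwa [← Matrix.dotProduct_mulVec]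

theorem exists_eigen (q l : ℂ) (U : Submodule ℂ (Fin 6 → ℂ)) (hU : Module.finrank ℂ U = 2)
    (hA : ∀ x ∈ U, x ᵥ* M1 q l ∈ U) :
    ∃ (μ : ℂ) (v : Fin 6 → ℂ), v ∈ U ∧ v ≠ 0 ∧ v ᵥ* M1 q l = μ • v := by
  let f : Module.End ℂ U := (Matrix.vecMulLinear (M1 q l)).restrict (p := U) (q := U) hA
  haveI : Nontrivial U := Module.nontrivial_of_finrank_pos (R := ℂ) (by omega)
  obtain ⟨μ, hμ⟩ := Module.End.exists_eigenvalue f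
  obtain ⟨v, hv⟩ := hμ.exists_hasEigenvector
  refine ⟨μ, v, v.2, ?_, ?_⟩
  · simpa using hv.2
  · have := congrArg Subtype.val hv.apply_eq_smul
    exact this

theorem no_invariant (q l : ℂ) (hqq : q^2 + q + 1 = 0) (hl0 : l ≠ 0)
    (hm1 : l ≠ -1) (h1 : l ≠ 1) (hq : l ≠ q) (hq2 : l ≠ q^2) (hl3 : l^3 ≠ q^2)
    (U : Submodule ℂ (Fin 6 → ℂ)) (hU : Module.finrank ℂ U = 2)
    (hA : ∀ x ∈ U, x ᵥ* M1 q l ∈ U) (hB : ∀ x ∈ U, x ᵥ* M2 q l ∈ U) : False := by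
  obtain ⟨μ, v, hv, hv0, hev⟩ := exists_eigen q l U hU hA
  obtain ⟨a, b, c, d, e, f, rfl⟩ : ∃ a b c d e f, v = ![a, b, c, d, e, f] :=
    ⟨v 0, v 1, v 2, v 3, v 4, v 5, by ext i; fin_cases i <;> rfl⟩
  rw [vm1] at hev
  have e0 : q * a = μ * a := congrFun hev 0
  have e1 : -q^2 * l * a + l * b = μ * b := congrFun hev 1
  have e2 : q^2 * (a + b + c) = μ * c := congrFun hev 2
  have e3 : q^2 * (a + d) = μ * d := congrFun hev 3
  have e4 : (-q^2 * a + b - q^2 * d + e) / l = μ * e := congrFun hev 4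
  have e5 : a + b + c + d + e + f = μ * f := congrFun hev 5
  rw [div_eq_iff hl0] at e4
  have hq3 : q^3 = 1 := by linear_combination (q - 1) * hqq
  have hq1 : q - 1 ≠ 0 := by
    intro h
    clear * - h hqq
    grind
  have hq0 : q ≠ 0 := by
    rintro rfl
    simp at hqq
  have hqs : q^2 - 1 ≠ 0 := by
    intro h
    clear * - h hqq
    grind
  have n1 : l - 1 ≠ 0 := sub_ne_zero.mpr h1
  have n2 : l + 1 ≠ 0 := fun h => hm1 (by linear_combination h)
  have n3 : l - q^2 ≠ 0 := sub_ne_zero.mpr hq2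
  have n4 : l - q ≠ 0 := sub_ne_zero.mpr hq
  have n5 : q * l - 1 ≠ 0 := by
    intro h
    exact n3 (by linear_combination q^2 * h - l * hq3)
  have n6 : l^2 - 1 ≠ 0 := by
    have : l^2 - 1 = (l - 1) * (l + 1) := by ring
    rw [this]
    exact mul_ne_zero n1 n2
  have n7 : 1 + l + l^2 ≠ 0 := by
    have : 1 + l + l^2 = (l - q) * (l - q^2) := by linear_combination l * hqq - hq3
    rw [this]
    exact mul_ne_zero n4 n3
  have conv : ∀ (t : ℂ) (w : Fin 6 → ℂ), t ≠ 0 → ![a, b, c, d, e, f] = t • w → w ∈ U := by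
    intro t w ht h
    rw [h] at hv
    exact (Submodule.smul_mem_iff U ht).mp hv
  clear hev
  by_cases ha : a = 0
  swap
  · have hμ : μ = q := (mul_right_cancel₀ ha e0).symm
    subst hμ
    obtain ⟨t, ht⟩ : ∃ t, d = t * (1 + l + l^2) := ⟨d / (1 + l + l^2), by field_simp⟩
    have ra : a = t * ((-2-μ) * (1+l+l^2)) := by
      clear * - e3 ht hqq
      grind
    have rb : b = t * (μ * (-2-μ) * l * (μ*l-1)) := by
      apply mul_left_cancel₀ n4
      clear * - e1 ra hqq
      grind
    have rc : c = t * (1 + (1-μ)*l - μ*l^2) := by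
      clear * - e2 ra rb hqq
      grind
    have re : e = t * (-μ * (l-1)) := by
      apply mul_left_cancel₀ n5
      clear * - e4 ra rb ht hqq
      grind
    have rf : f = t * (μ * l) := by
      apply mul_left_cancel₀ (show μ - 1 ≠ 0 from hq1)
      linear_combination -e5 + ra + rb + rc + ht + re - t * l^2 * (μ+1) * hqq
    have ht0 : t ≠ 0 := by
      rintro rfl
      simp [ra] at ha
    refine case_q μ l U hqq hl0 hU hA hB hm1 hq2 (conv t _ ht0 ?_)
    ext i
    fin_cases i
    exacts [ra, rb, rc, ht, re, rf]
  subst ha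
  by_cases hb : b = 0
  swap
  · have hμ : μ = l := by
      apply mul_right_cancel₀ hb
      linear_combination -e1
    subst hμ
    obtain ⟨t, ht⟩ : ∃ t, b = t * ((μ-1) * (μ^2-1) * (μ-q^2)) :=
      ⟨b / ((μ-1) * (μ^2-1) * (μ-q^2)), by field_simp⟩
    have rc : c = t * (q^2 * (μ-1) * (μ^2-1)) := by
      apply mul_left_cancel₀ n3
      linear_combination q^2 * ht - e2
    have rd : d = t * 0 := by
      apply mul_left_cancel₀ n3
      linear_combination - e3
    have re : e = t * ((μ-1) * (μ-q^2)) := by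
      apply mul_left_cancel₀ n6
      linear_combination -e4 + ht - q^2 * rd
    have rf : f = t * (μ^3 - q^2) := by
      apply mul_left_cancel₀ n1
      linear_combination -e5 + ht + rc + rd + re
    have ht0 : t ≠ 0 := by
      rintro rfl
      simp [ht] at hb
    refine case_l q μ U hqq hl0 hU hA hB hl3 hm1 h1 hq2 (conv t _ ht0 ?_)
    ext i
    fin_cases i
    exacts [(mul_zero t).symm, ht, rc, rd, re, rf]
  subst hb
  by_cases hcd : c ≠ 0 ∨ d ≠ 0
  · have hμ : μ = q^2 := by
      rcases hcd with h | h
      · apply mul_right_cancel₀ h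
        linear_combination -e2
      · apply mul_right_cancel₀ h
        linear_combination -e3
    subst hμ
    obtain ⟨s, hs⟩ : ∃ s, e = s * (q^2 - 1) := ⟨e / (q^2 - 1), by field_simp⟩
    obtain ⟨r, hr⟩ : ∃ r, c = r * (q^2 - 1) := ⟨c / (q^2 - 1), by field_simp⟩
    have rd : d = s * (q - l) * (q^2 - 1) := by
      clear * - e4 hs hqq
      grind
    have rf : f = r + s * (q - l) + s := by
      apply mul_left_cancel₀ hqs
      linear_combination -e5 + hr + rd + hs
    refine case_q2 q l U hqq hl0 hU hA hB hl3 r s ?_ ?_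
    · by_contra! h
      rw [h.1, zero_mul] at hr
      rw [h.2, zero_mul, zero_mul] at rd
      simp [hr, rd] at hcd
    · rw [← hr, ← rd, ← hs, ← rf]
      exact hv
  push Not at hcd
  obtain ⟨rfl, rfl⟩ := hcd
  by_cases he : e = 0
  · subst he
    have hf : f ≠ 0 := by
      rintro rfl
      apply hv0
      ext i
      fin_cases i <;> rfl
    refine case_one q l U hqq hl0 hU hA hB (conv f _ hf ?_)
    ext i
    fin_cases i <;> simp
  · have hμ : μ * l = 1 := by
      apply mul_right_cancel₀ he
      linear_combination -e4
    obtain ⟨t, ht⟩ : ∃ t, f = t * l := ⟨f / l, by field_simp⟩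
    have re : e = t * (1 - l) := by
      linear_combination e5 - ht + μ * ht + t * hμ
    have ht0 : t ≠ 0 := by
      rintro rfl
      simp [re] at he
    refine case_linv q l U hqq hl0 hU hA hB (conv t _ ht0 ?_)
    ext i
    fin_cases i
    exacts [(mul_zero t).symm, (mul_zero t).symm, (mul_zero t).symm, (mul_zero t).symm, re, ht]

theorem exists_invariant (q l : ℂ) (hqq : q^2 + q + 1 = 0) (hl0 : l ≠ 0) (hl3 : l^3 = q^2) :
    ∃ W : Submodule ℂ (Fin 6 → ℂ), RhoInvariant q l W ∧ Module.finrank ℂ W = 4 := by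
  let N : Matrix (Fin 2) (Fin 6) ℂ := !![0, 0, q^2 + l, q - l, 1, 0; 0, q^2, 0, -l, l - q^2, 0]
  have hmem : ∀ x : Fin 6 → ℂ, x ∈ LinearMap.ker N.mulVecLin ↔
      (q^2 + l) * x 2 + (q - l) * x 3 + x 4 = 0 ∧ q^2 * x 1 - l * x 3 + (l - q^2) * x 4 = 0 := by
    intro x
    have hx : N *ᵥ x = ![(q^2 + l) * x 2 + (q - l) * x 3 + x 4,
        q^2 * x 1 - l * x 3 + (l - q^2) * x 4] := by
      ext i
      fin_cases i <;> simp [N, Matrix.mulVec, dotProduct, Fin.sum_univ_six] <;> ring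
    rw [LinearMap.mem_ker, Matrix.mulVecLin_apply, hx, funext_iff, Fin.forall_fin_two]
    simp
  refine ⟨LinearMap.ker N.mulVecLin, ⟨?_, ?_⟩, ?_⟩
  · intro x hx
    rw [hmem] at hx ⊢
    obtain ⟨h1, h2⟩ := hx
    simp [M1, Matrix.mulVec, dotProduct, Fin.sum_univ_six]
    clear hmem N
    constructor
    · field_simp
      grind
    · field_simp
      grind
  · intro x hx
    rw [hmem] at hx ⊢
    obtain ⟨h1, h2⟩ := hx
    simp [M2, Matrix.mulVec, dotProduct, Fin.sum_univ_six]
    clear hmem N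
    constructor
    · field_simp
      grind
    · field_simp
      grind
  · have hs : Function.Surjective N.mulVecLin := by
      intro y
      refine ⟨![0, q * (y 1 - (l - q^2) * y 0), 0, 0, y 0, 0], ?_⟩
      ext i
      have hq3 : q^3 = 1 := by linear_combination (q - 1) * hqq
      fin_cases i
      · simp [N, Matrix.mulVec, dotProduct, Fin.sum_univ_succ]
      · simp [N, Matrix.mulVec, dotProduct, Fin.sum_univ_succ]
        linear_combination (y 1 - (l - q^2) * y 0) * hq3
    have := LinearMap.finrank_range_add_finrank_ker N.mulVecLin
    rw [LinearMap.range_eq_top.mpr hs] at this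
    simp at this
    omega

theorem stmt10 (q l : ℂ) (hq3 : q^3 = 1) (hq1 : q ≠ 1) (hl0 : l ≠ 0)
    (hm1 : l ≠ -1) (h1 : l ≠ 1) (hq : l ≠ q) (hq2 : l ≠ q^2) :
    (¬ ∃ W : Submodule ℂ (Fin 6 → ℂ), RhoInvariant q l W ∧ Module.finrank ℂ W = 4) ↔
      l^3 ≠ q^2 := by
  have hqq : q^2 + q + 1 = 0 := by
    have : (q - 1) * (q^2 + q + 1) = 0 := by linear_combination hq3
    exact (mul_eq_zero.mp this).resolve_left (sub_ne_zero.mpr hq1)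
  constructor
  · intro h hl3
    exact h (exists_invariant q l hqq hl0 hl3)
  · rintro hl3 ⟨W, hW, hd⟩
    obtain ⟨U, hU, hA, hB⟩ := exists_plane q l W hW hd
    exact no_invariant q l hqq hl0 hm1 h1 hq hq2 hl3 U hU hA hB
end

section
/- The representation ρ is reducible (i.e., there exists a ρ-invariant subspace of ℂ⁶ other than {0} and ℂ⁶) if and only if λ₁² = −q, or λ₁² = −q², or λ₁³ = q, or λ₁³ = q². -/
open Matrix Polynomial

lemma M1_mulVec (q l : ℂ) (x : Fin 6 → ℂ) : (M1 q l).mulVec x =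
    ![q * x 0 - q^2*l * x 1 + q^2 * x 2 + q^2 * x 3 - q^2*l⁻¹ * x 4 + x 5,
      l * x 1 + q^2 * x 2 + l⁻¹ * x 4 + x 5,
      q^2 * x 2 + x 5,
      q^2 * x 3 - q^2*l⁻¹ * x 4 + x 5,
      l⁻¹ * x 4 + x 5,
      x 5] := by
  ext i
  fin_cases i <;> simp [M1, Matrix.mulVec, dotProduct, Fin.sum_univ_succ] <;> ring

lemma M2_mulVec (q l : ℂ) (x : Fin 6 → ℂ) : (M2 q l).mulVec x =
    ![x 0,
      -l⁻¹ * x 0 + l⁻¹ * x 1,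
      q * x 0 + x 1 + q^2 * x 2,
      -q^2 * x 0 + q^2 * x 3,
      l * x 0 - l * x 1 - l * x 3 + l * x 4,
      - x 0 - q^2 * x 1 - q * x 2 + x 3 + q^2 * x 4 + q * x 5] := by
  ext i
  fin_cases i <;> simp [M2, Matrix.mulVec, dotProduct, Fin.sum_univ_succ] <;> ring

/-- The common kernel of a family of linear equations, given as rows of a matrix. -/
lemma red_of_ker {k : ℕ} (q l : ℂ) (N : Matrix (Fin k) (Fin 6) ℂ)
    (h1 : ∀ x, N.mulVec x = 0 → N.mulVec ((M1 q l).mulVec x) = 0)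
    (h2 : ∀ x, N.mulVec x = 0 → N.mulVec ((M2 q l).mulVec x) = 0)
    (y z : Fin 6 → ℂ) (hy : N.mulVec y = 0) (hy0 : y ≠ 0) (hz : N.mulVec z ≠ 0) :
    ∃ W : Submodule ℂ (Fin 6 → ℂ), RhoInvariant q l W ∧ W ≠ ⊥ ∧ W ≠ ⊤ := by
  refine ⟨LinearMap.ker N.mulVecLin, ⟨?_, ?_⟩, ?_, ?_⟩
  · intro x hx
    simpa using h1 x (by simpa using hx)
  · intro x hx
    simpa using h2 x (by simpa using hx)
  · intro h
    apply hy0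
    have : y ∈ LinearMap.ker N.mulVecLin := by simpa using hy
    rw [h] at this
    simpa using this
  · intro h
    apply hz
    have : z ∈ LinearMap.ker N.mulVecLin := by rw [h]; trivial
    simpa using this

lemma case1 (q l : ℂ) (hl0 : l ≠ 0) (hqq : q^2 + q + 1 = 0) (h : l^2 = -q) :
    ∃ W : Submodule ℂ (Fin 6 → ℂ), RhoInvariant q l W ∧ W ≠ ⊥ ∧ W ≠ ⊤ := by
  obtain rfl : q = -l^2 := by linear_combination h
  have hm : l^4 = l^2 - 1 := by linear_combination hqq
  have hL : l⁻¹ = l - l^3 := by field_simp; linear_combination hm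
  refine red_of_ker _ l !![l^2+l^3, -1, 0, 0, 0, 0; 0, 0, -l, -1, 0, 0;
    0, 0, 0, 0, 1-l+l^3, -1] ?_ ?_ ![0,0,1,-l,0,0] ![0,1,0,0,0,0] ?_ ?_ ?_
  · intro x hx
    have a0 := congrFun hx 0
    have a1 := congrFun hx 1
    have a2 := congrFun hx 2
    simp [Matrix.mulVec, dotProduct, Fin.sum_univ_succ] at a0 a1 a2
    rw [M1_mulVec, hL]
    ext i
    fin_cases i <;> simp [Matrix.mulVec, dotProduct, Fin.sum_univ_succ] <;> grind
  · intro x hx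
    have a0 := congrFun hx 0
    have a1 := congrFun hx 1
    have a2 := congrFun hx 2
    simp [Matrix.mulVec, dotProduct, Fin.sum_univ_succ] at a0 a1 a2
    rw [M2_mulVec, hL]
    ext i
    fin_cases i <;> simp [Matrix.mulVec, dotProduct, Fin.sum_univ_succ] <;> grind
  · ext i
    fin_cases i <;> simp [Matrix.mulVec, dotProduct, Fin.sum_univ_succ]
  · intro h
    simpa using congrFun h 2
  · intro h
    simpa [Matrix.mulVec, dotProduct, Fin.sum_univ_succ] using congrFun h 0

lemma case2 (q l : ℂ) (hl0 : l ≠ 0) (hqq : q^2 + q + 1 = 0) (h : l^2 = -q^2) :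
    ∃ W : Submodule ℂ (Fin 6 → ℂ), RhoInvariant q l W ∧ W ≠ ⊥ ∧ W ≠ ⊤ := by
  obtain rfl : q = l^2 - 1 := by linear_combination -h + hqq
  have hm : l^4 = l^2 - 1 := by linear_combination hqq
  have hL : l⁻¹ = l - l^3 := by field_simp; linear_combination hm
  refine red_of_ker _ l !![-1, 0, 2-2*l-2*l^2+4*l^3, -2+l^2, 2*l^2-2*l^3, 0;
    0, -1, 2*l+2*l^2-2*l^3, 2+2*l^3, -l^2, 0;
    0, 0, 3-4*l+3*l^2, 2*l-2*l^2+2*l^3, -2+2*l-2*l^3, -1] ?_ ?_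
    ![2*l^2-2*l^3,-l^2,0,0,1,-2+2*l-2*l^3] ![1,0,0,0,0,0] ?_ ?_ ?_
  · intro x hx
    have a0 := congrFun hx 0
    have a1 := congrFun hx 1
    have a2 := congrFun hx 2
    simp [Matrix.mulVec, dotProduct, Fin.sum_univ_succ] at a0 a1 a2
    have b0 : x 0 = (2-2*l-2*l^2+4*l^3) * x 2 + (-2+l^2) * x 3 + (2*l^2-2*l^3) * x 4 := by
      linear_combination -a0
    have b1 : x 1 = (2*l+2*l^2-2*l^3) * x 2 + (2+2*l^3) * x 3 - l^2 * x 4 := by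
      linear_combination -a1
    have b2 : x 5 = (3-4*l+3*l^2) * x 2 + (2*l-2*l^2+2*l^3) * x 3 + (-2+2*l-2*l^3) * x 4 := by
      linear_combination -a2
    rw [M1_mulVec, hL, b0, b1, b2]
    clear a0 a1 a2 b0 b1 b2 hL h hqq hx hl0
    ext i
    fin_cases i <;> simp [Matrix.mulVec, dotProduct, Fin.sum_univ_succ] <;> grind
  · intro x hx
    have a0 := congrFun hx 0
    have a1 := congrFun hx 1
    have a2 := congrFun hx 2
    simp [Matrix.mulVec, dotProduct, Fin.sum_univ_succ] at a0 a1 a2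
    have b0 : x 0 = (2-2*l-2*l^2+4*l^3) * x 2 + (-2+l^2) * x 3 + (2*l^2-2*l^3) * x 4 := by
      linear_combination -a0
    have b1 : x 1 = (2*l+2*l^2-2*l^3) * x 2 + (2+2*l^3) * x 3 - l^2 * x 4 := by
      linear_combination -a1
    have b2 : x 5 = (3-4*l+3*l^2) * x 2 + (2*l-2*l^2+2*l^3) * x 3 + (-2+2*l-2*l^3) * x 4 := by
      linear_combination -a2
    rw [M2_mulVec, hL, b0, b1, b2]
    clear a0 a1 a2 b0 b1 b2 hL h hqq hx hl0
    ext i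
    fin_cases i <;> simp [Matrix.mulVec, dotProduct, Fin.sum_univ_succ] <;> grind
  · ext i
    fin_cases i <;> simp [Matrix.mulVec, dotProduct, Fin.sum_univ_succ]
  · intro h
    simpa using congrFun h 4
  · intro h
    simpa [Matrix.mulVec, dotProduct, Fin.sum_univ_succ] using congrFun h 0

lemma case3 (q l : ℂ) (hl0 : l ≠ 0) (hqq : q^2 + q + 1 = 0) (h : l^3 = q) :
    ∃ W : Submodule ℂ (Fin 6 → ℂ), RhoInvariant q l W ∧ W ≠ ⊥ ∧ W ≠ ⊤ := by
  obtain rfl : q = l^3 := h.symm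
  have hm : l^6 = -l^3 - 1 := by linear_combination hqq
  have hL : l⁻¹ = -l^2 - l^5 := by field_simp; linear_combination hm
  refine red_of_ker _ l !![1, 0, 0, 0, 0, 0; 0, 0, 0, 0, 0, 1;
    0, -1, 1-l^2+l^3-l^5, l, 0, 0;
    0, 0, -l^2-l^5, l-l^3, -1, 0] ?_ ?_
    ![0,l,0,1,l-l^3,0] ![1,0,0,0,0,0] ?_ ?_ ?_
  · intro x hx
    have a0 := congrFun hx 0
    have a1 := congrFun hx 1
    have a2 := congrFun hx 2
    have a3 := congrFun hx 3
    simp [Matrix.mulVec, dotProduct, Fin.sum_univ_succ] at a0 a1 a2 a3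
    have b2 : x 1 = (1-l^2+l^3-l^5) * x 2 + l * x 3 := by
      linear_combination -a2
    have b3 : x 4 = (-l^2-l^5) * x 2 + (l-l^3) * x 3 := by
      linear_combination -a3
    rw [M1_mulVec, hL, a0, a1, b2, b3]
    clear * - hm
    ext i
    fin_cases i <;> simp [Matrix.mulVec, dotProduct, Fin.sum_univ_succ] <;> grind
  · intro x hx
    have a0 := congrFun hx 0
    have a1 := congrFun hx 1
    have a2 := congrFun hx 2
    have a3 := congrFun hx 3
    simp [Matrix.mulVec, dotProduct, Fin.sum_univ_succ] at a0 a1 a2 a3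
    have b2 : x 1 = (1-l^2+l^3-l^5) * x 2 + l * x 3 := by
      linear_combination -a2
    have b3 : x 4 = (-l^2-l^5) * x 2 + (l-l^3) * x 3 := by
      linear_combination -a3
    rw [M2_mulVec, hL, a0, a1, b2, b3]
    clear * - hm
    ext i
    fin_cases i <;> simp [Matrix.mulVec, dotProduct, Fin.sum_univ_succ] <;> grind
  · ext i
    fin_cases i <;> simp [Matrix.mulVec, dotProduct, Fin.sum_univ_succ]
  · intro h
    simpa using congrFun h 3
  · intro h
    simpa [Matrix.mulVec, dotProduct, Fin.sum_univ_succ] using congrFun h 0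

lemma case4 (q l : ℂ) (hl0 : l ≠ 0) (hqq : q^2 + q + 1 = 0) (h : l^3 = q^2) :
    ∃ W : Submodule ℂ (Fin 6 → ℂ), RhoInvariant q l W ∧ W ≠ ⊥ ∧ W ≠ ⊤ := by
  obtain rfl : q = -1 - l^3 := by linear_combination hqq + h
  have hm : l^6 = -l^3 - 1 := by linear_combination hqq
  have hL : l⁻¹ = -l^2 - l^5 := by field_simp; linear_combination hm
  refine red_of_ker _ l !![0, 1-l^2+l^4, l^2-l^4, -1, 0, 0;
    0, 1-l^2, l^2, 0, -1, 0] ?_ ?_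
    ![1,0,0,0,0,0] ![0,0,0,1,0,0] ?_ ?_ ?_
  · intro x hx
    have a0 := congrFun hx 0
    have a1 := congrFun hx 1
    simp [Matrix.mulVec, dotProduct, Fin.sum_univ_succ] at a0 a1
    rw [M1_mulVec, hL]
    ext i
    fin_cases i <;> simp [Matrix.mulVec, dotProduct, Fin.sum_univ_succ] <;> grind
  · intro x hx
    have a0 := congrFun hx 0
    have a1 := congrFun hx 1
    simp [Matrix.mulVec, dotProduct, Fin.sum_univ_succ] at a0 a1
    rw [M2_mulVec, hL]
    ext i
    fin_cases i <;> simp [Matrix.mulVec, dotProduct, Fin.sum_univ_succ] <;> grind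
  · ext i
    fin_cases i <;> simp [Matrix.mulVec, dotProduct, Fin.sum_univ_succ]
  · intro h
    simpa using congrFun h 0
  · intro h
    simpa [Matrix.mulVec, dotProduct, Fin.sum_univ_succ] using congrFun h 0

/-- The operator `M1 - m`. -/
noncomputable def DD (q l m : ℂ) (x : Fin 6 → ℂ) : Fin 6 → ℂ := (M1 q l).mulVec x - m • x

lemma DD_apply (q l m : ℂ) (x : Fin 6 → ℂ) : DD q l m x =
    ![(q - m) * x 0 - q^2*l * x 1 + q^2 * x 2 + q^2 * x 3 - q^2*l⁻¹ * x 4 + x 5,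
      (l - m) * x 1 + q^2 * x 2 + l⁻¹ * x 4 + x 5,
      (q^2 - m) * x 2 + x 5,
      (q^2 - m) * x 3 - q^2*l⁻¹ * x 4 + x 5,
      (l⁻¹ - m) * x 4 + x 5,
      (1 - m) * x 5] := by
  rw [DD, M1_mulVec]
  ext i
  fin_cases i <;> simp <;> ring

lemma DD_mem {q l : ℂ} {W : Submodule ℂ (Fin 6 → ℂ)} (hW : RhoInvariant q l W) (m : ℂ)
    {x : Fin 6 → ℂ} (hx : x ∈ W) : DD q l m x ∈ W :=
  W.sub_mem (hW.1 x hx) (W.smul_mem _ hx)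

/-- If the last coordinate vanishes on `W`, then `W = 0` (unless `l^3 = q`). -/
lemma stepA {q l : ℂ} {W : Submodule ℂ (Fin 6 → ℂ)} (hW : RhoInvariant q l W)
    (hl0 : l ≠ 0) (hqq : q^2 + q + 1 = 0) (h : l^3 ≠ q)
    (h5 : ∀ x ∈ W, x 5 = 0) : W = ⊥ := by
  have hL : l * l⁻¹ = 1 := mul_inv_cancel₀ hl0
  have r : ∀ x ∈ W, - x 0 - q^2 * x 1 - q * x 2 + x 3 + q^2 * x 4 = 0 := by
    intro x hx
    have a := h5 _ (hW.2 x hx)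
    have b := h5 x hx
    rw [M2_mulVec] at a
    simp at a
    linear_combination a - q * b
  have s : ∀ x ∈ W, x 1 + q^2 * x 2 - q * x 3 - x 4 = 0 := by
    intro x hx
    have a := r _ (DD_mem hW q hx)
    have b := h5 x hx
    rw [DD_apply] at a
    simp at a
    generalize l⁻¹ = L at *
    grind
  have t : ∀ x ∈ W, -q^2*(l+q) * x 2 + q*(l-q^2) * x 3 + (l + l⁻¹) * x 4 = 0 := by
    intro x hx
    have a := s _ (DD_mem hW l hx)
    have b := h5 x hx
    rw [DD_apply] at a
    simp at a
    generalize l⁻¹ = L at *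
    grind
  have u : ∀ x ∈ W, x 4 = 0 := by
    intro x hx
    have a := t _ (DD_mem hW (q^2) hx)
    have b := h5 x hx
    rw [DD_apply] at a
    simp at a
    have : (l^3 - q) * x 4 = 0 := by
      generalize l⁻¹ = L at *
      grind
    exact (mul_eq_zero.1 this).resolve_left (sub_ne_zero.2 h)
  have w : ∀ x ∈ W, q*(l^2+1) * x 2 + (q*l^2-1) * x 3 = 0 := by
    intro x hx
    have a := r _ (hW.2 x hx)
    rw [M2_mulVec] at a
    simp at a
    have b := h5 x hx
    have c := u x hx
    have d := r x hx
    have e := s x hx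
    generalize l⁻¹ = L at *
    have e' : x 1 = - q^2 * x 2 + q * x 3 + x 4 := by linear_combination e
    have d' : x 0 = - q^2 * x 1 - q * x 2 + x 3 + q^2 * x 4 := by linear_combination -d
    rw [e'] at d'
    rw [d', e', c] at a
    refine Eq.trans ?_ (congrArg (fun z => l * z) a) |>.trans (mul_zero l)
    clear * - hqq hL
    grind
  rw [Submodule.eq_bot_iff]
  intro x hx
  have b := h5 x hx
  have c := u x hx
  have d := r x hx
  have e := s x hx
  have f := t x hx
  have g := w x hx
  have hne : l^3 - q ≠ 0 := sub_ne_zero.2 h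
  rw [c] at *
  have q0 : q ≠ 0 := by rintro rfl; simp at hqq
  have x3 : x 3 = 0 := by
    have : (l^3 - q) * x 3 = 0 := by grind
    exact (mul_eq_zero.1 this).resolve_left hne
  have x2 : x 2 = 0 := by
    have : (l^3 - q) * x 2 = 0 := by grind
    exact (mul_eq_zero.1 this).resolve_left hne
  have x1 : x 1 = 0 := by rw [x2, x3] at e; simpa using e
  have x0 : x 0 = 0 := by rw [x1, x2, x3] at d; simpa using d
  ext i
  fin_cases i <;> simp [*]

/-- The left eigenvector of `M1` for the eigenvalue `q`. -/
noncomputable def psi (q l : ℂ) (x : Fin 6 → ℂ) : ℂ :=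
  (1+2*q)*(l-q)*(l-q^2) * x 0 + (1+2*q)*q^2*l*(l-q^2) * x 1 - (l+1)*(l-q^2) * x 2
    + q^2*(l-q)*(l-q^2) * x 3 - (l-1) * x 4 + l * x 5

lemma DD_chain (q l : ℂ) (hl0 : l ≠ 0) (hqq : q^2 + q + 1 = 0) (x : Fin 6 → ℂ) :
    l • DD q l l (DD q l (q^2) (DD q l l⁻¹ (DD q l 1 x))) =
      ((1+2*q) * psi q l x) • ![1,0,0,0,0,0] := by
  have hL : l * l⁻¹ = 1 := mul_inv_cancel₀ hl0
  rw [DD_apply q l 1, DD_apply q l l⁻¹, DD_apply q l (q^2), DD_apply q l l, psi]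
  generalize l⁻¹ = L at *
  ext i
  fin_cases i <;> simp <;> grind

lemma stepB {q l : ℂ} {W : Submodule ℂ (Fin 6 → ℂ)} (hW : RhoInvariant q l W)
    (hl0 : l ≠ 0) (hqq : q^2 + q + 1 = 0) (ha : l^2 ≠ -q) (hb : l^2 ≠ -q^2)
    (hp : ∀ x ∈ W, psi q l x = 0) : ∀ x ∈ W, x 5 = 0 := by
  have hL : l * l⁻¹ = 1 := mul_inv_cancel₀ hl0
  have p1 : ∀ x ∈ W, ((-1+q)*l) * x 0 + (1-q)*(l+q) * x 1 + (-2-q+(-1+q)*l+(-1+q)*l^2) * x 2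
      + (-2-q+(-2-q)*l+(-1+q)*l^2) * x 3 + (-1-2*q)*l*(l+q) * x 4 + (-2-q)*l * x 5 = 0 := by
    intro x hx
    have a := hp _ (hW.2 x hx)
    rw [M2_mulVec, psi] at a
    simp [-mul_eq_zero] at a
    refine Eq.trans ?_ (congrArg (fun z => (1+2*q) * z) a) |>.trans (mul_zero _)
    generalize l⁻¹ = L at *
    clear * - hqq hL
    grind
  have p2 : ∀ x ∈ W, (-1-2*q)*(l^2+q) * x 1 + (1+2*q+(3+3*q)*l+(3+3*q)*l^2) * x 2
      + (3*q+(2+4*q)*l+(3+3*q)*l^2) * x 3 + (-3*q+(-2-q)*l)*(l+1) * x 4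
      + (-3+(-4+q)*l-3*l^2) * x 5 = 0 := by
    intro x hx
    have a := p1 _ (DD_mem hW q hx)
    rw [DD_apply] at a
    simp [-mul_eq_zero] at a
    refine Eq.trans ?_ a
    generalize l⁻¹ = L at *
    clear * - hqq hL
    grind
  have p3 : ∀ x ∈ W, (-3*q+(-1-2*q)*l+(-3-3*q)*l^2)*(l+1) * x 2
      + (-3*q+(-2-4*q)*l+(-3-3*q)*l^2)*(l-q^2) * x 3 + (2+q)*l⁻¹*(l+1)^2*(l+q)^2 * x 4
      + (3*q+(2+4*q)*l+(4+2*q)*l^2+3*l^3) * x 5 = 0 := by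
    intro x hx
    have a := p2 _ (DD_mem hW l hx)
    rw [DD_apply] at a
    simp [-mul_eq_zero] at a
    refine Eq.trans ?_ a
    generalize l⁻¹ = L at *
    clear * - hqq hL
    grind
  have p4 : ∀ x ∈ W, (1+2*q)*l⁻¹^2*(l^2+q^2)*(l^3-q) * x 4
      + ((2+q)*l⁻¹+(2-2*q)+(2-2*q)*l)*(l^2+q^2) * x 5 = 0 := by
    intro x hx
    have a := p3 _ (DD_mem hW (q^2) hx)
    rw [DD_apply] at a
    simp [-mul_eq_zero] at a
    refine Eq.trans ?_ a
    generalize l⁻¹ = L at *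
    clear * - hqq hL
    grind
  intro x hx
  have a := p4 _ (DD_mem hW l⁻¹ hx)
  rw [DD_apply] at a
  simp [-mul_eq_zero] at a
  have : 3 * (l^2+q) * (l^2+q^2) * x 5 = 0 := by
    refine Eq.trans ?_ (congrArg (fun z => l * z) a) |>.trans (mul_zero l)
    generalize l⁻¹ = L at *
    clear * - hqq hL
    grind
  have h1 : l^2 + q ≠ 0 := fun h => ha (by linear_combination h)
  have h2 : l^2 + q^2 ≠ 0 := fun h => hb (by linear_combination h)
  simpa [h1, h2] using this

lemma stepC {q l : ℂ} {W : Submodule ℂ (Fin 6 → ℂ)} (hW : RhoInvariant q l W)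
    (hl0 : l ≠ 0) (hqq : q^2 + q + 1 = 0) (hlq : l ≠ q) (h : l^3 ≠ q^2)
    (e0 : ![1,0,0,0,0,0] ∈ W) : W = ⊤ := by
  have hL : l * l⁻¹ = 1 := mul_inv_cancel₀ hl0
  have hL0 : l⁻¹ ≠ 0 := inv_ne_zero hl0
  have hq1 : q - 1 ≠ 0 := by
    intro h
    have : q = 1 := by linear_combination h
    rw [this] at hqq
    norm_num at hqq
  have hne : l^3 - q^2 ≠ 0 := sub_ne_zero.2 h
  have hlq' : l - q ≠ 0 := sub_ne_zero.2 hlq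
  have u0 : ![1, -l⁻¹, q, -q^2, l, -1] ∈ W := by
    convert hW.2 _ e0 using 1
    rw [M2_mulVec]
    ext i
    fin_cases i <;> simp
  have u1 : ![-1, l⁻¹, -q, q^2, -l, 0] ∈ W := by
    convert DD_mem hW 1 u0 using 1
    rw [DD_apply]
    generalize l⁻¹ = L at *
    clear * - hqq hL
    ext i
    fin_cases i <;> simp <;> grind
  have u2 : ![-l⁻¹*(l-1), -l⁻¹^2*(l^2+1), -l⁻¹*(l-q), -l⁻¹*(l+q^2), 0, 0] ∈ W := by
    convert DD_mem hW l⁻¹ u1 using 1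
    rw [DD_apply]
    generalize l⁻¹ = L at *
    clear * - hqq hL
    ext i
    fin_cases i <;> simp <;> grind
  have u3 : ![l⁻¹+1+q^2*l, -l⁻¹^2*(l^3-q^2), 0, 0, 0, 0] ∈ W := by
    convert DD_mem hW (q^2) u2 using 1
    rw [DD_apply]
    generalize l⁻¹ = L at *
    clear * - hqq hL
    ext i
    fin_cases i <;> simp <;> grind
  have v0 : ![1, -l⁻¹^2*(l+1), -q^2*l⁻¹*(l+q), 1, 1-q*l+l^2, q^2*l⁻¹*(l^2-l+1)] ∈ W := by
    convert hW.2 _ u0 using 1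
    rw [M2_mulVec]
    generalize l⁻¹ = L at *
    clear * - hqq hL
    ext i
    fin_cases i <;> simp <;> grind
  have v1 : ![q^2, -q*l⁻¹^2*(l+1)*(l-q)*(l+q), q^2*l⁻¹*(l+1)*(l+q), 0, -q*l⁻¹-l^2, 0] ∈ W := by
    convert DD_mem hW 1 v0 using 1
    rw [DD_apply]
    generalize l⁻¹ = L at *
    clear * - hqq hL
    ext i
    fin_cases i <;> simp <;> grind
  have v2 : ![(-q^2*l⁻¹^2+q+l)*(l-q), -l⁻¹^3+q^2*l⁻¹^2+q-l-q*l^2, q*l⁻¹^2*(l+1)*(l-q)*(l+q),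
      l⁻¹^2+q^2*l, 0, 0] ∈ W := by
    convert DD_mem hW l⁻¹ v1 using 1
    rw [DD_apply]
    generalize l⁻¹ = L at *
    clear * - hqq hL
    ext i
    fin_cases i <;> simp <;> grind
  have e1 : ![0,1,0,0,0,0] ∈ W := by
    have hc : -l⁻¹^2*(l^3-q^2) ≠ 0 := by simp [hl0, hne]
    rw [← W.smul_mem_iff hc]
    convert W.sub_mem u3 (W.smul_mem (l⁻¹+1+q^2*l) e0) using 1
    ext i
    fin_cases i <;> simp
  -- the two vectors `u2`, `v2` modulo `e0`, `e1`
  have u2' : ![0, 0, -l⁻¹*(l-q), -l⁻¹*(l+q^2), 0, 0] ∈ W := by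
    convert W.sub_mem (W.sub_mem u2 (W.smul_mem (-l⁻¹*(l-1)) e0))
      (W.smul_mem (-l⁻¹^2*(l^2+1)) e1) using 1
    ext i
    fin_cases i <;> simp
  have v2' : ![0, 0, q*l⁻¹^2*(l+1)*(l-q)*(l+q), l⁻¹^2+q^2*l, 0, 0] ∈ W := by
    convert W.sub_mem (W.sub_mem v2 (W.smul_mem ((-q^2*l⁻¹^2+q+l)*(l-q)) e0))
      (W.smul_mem (-l⁻¹^3+q^2*l⁻¹^2+q-l-q*l^2) e1) using 1
    ext i
    fin_cases i <;> simp
  have hd : l⁻¹^3*(l-q)*(q-1)*(-q)*(l^3-q^2) ≠ 0 := by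
    have q0 : q ≠ 0 := by rintro rfl; simp at hqq
    exact mul_ne_zero (mul_ne_zero (mul_ne_zero (mul_ne_zero (pow_ne_zero 3 hL0) hlq') hq1)
      (neg_ne_zero.2 q0)) hne
  have e2 : ![0,0,1,0,0,0] ∈ W := by
    rw [← W.smul_mem_iff hd]
    convert W.sub_mem (W.smul_mem (l⁻¹^2+q^2*l) u2') (W.smul_mem (-l⁻¹*(l+q^2)) v2') using 1
    generalize l⁻¹ = L at *
    clear * - hqq hL
    ext i
    fin_cases i <;> simp <;> grind
  have e3 : ![0,0,0,1,0,0] ∈ W := by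
    rw [← W.smul_mem_iff hd]
    convert W.sub_mem (W.smul_mem (-l⁻¹*(l-q)) v2')
      (W.smul_mem (q*l⁻¹^2*(l+1)*(l-q)*(l+q)) u2') using 1
    generalize l⁻¹ = L at *
    clear * - hqq hL
    ext i
    fin_cases i <;> simp <;> grind
  have e4 : ![0,0,0,0,1,0] ∈ W := by
    rw [← W.smul_mem_iff (neg_ne_zero.2 hl0)]
    convert W.sub_mem (W.sub_mem (W.sub_mem (W.sub_mem u1 (W.smul_mem (-1) e0))
      (W.smul_mem l⁻¹ e1)) (W.smul_mem (-q) e2)) (W.smul_mem (q^2) e3) using 1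
    ext i
    fin_cases i <;> simp
  have e5 : ![0,0,0,0,0,1] ∈ W := by
    rw [← W.smul_mem_iff (neg_ne_zero.2 (one_ne_zero (α := ℂ)))]
    convert W.add_mem u0 u1 using 1
    ext i
    fin_cases i <;> simp
  rw [Submodule.eq_top_iff']
  intro x
  convert W.add_mem (W.add_mem (W.add_mem (W.add_mem (W.add_mem (W.smul_mem (x 0) e0)
    (W.smul_mem (x 1) e1)) (W.smul_mem (x 2) e2)) (W.smul_mem (x 3) e3))
    (W.smul_mem (x 4) e4)) (W.smul_mem (x 5) e5) using 1
  ext i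
  fin_cases i <;> simp

theorem stmt16 (q l : ℂ) (hq3 : q^3 = 1) (hq1 : q ≠ 1) (hl0 : l ≠ 0)
    (hm1 : l ≠ -1) (h1 : l ≠ 1) (hq : l ≠ q) (hq2 : l ≠ q^2) :
    (∃ W : Submodule ℂ (Fin 6 → ℂ), RhoInvariant q l W ∧ W ≠ ⊥ ∧ W ≠ ⊤) ↔
      (l^2 = -q ∨ l^2 = -q^2 ∨ l^3 = q ∨ l^3 = q^2) := by

  have hqq : q^2 + q + 1 = 0 := by
    have : (q - 1) * (q^2 + q + 1) = 0 := by linear_combination hq3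
    exact (mul_eq_zero.1 this).resolve_left (sub_ne_zero.2 hq1)
  constructor
  · rintro ⟨W, hW, hbot, htop⟩
    by_contra hcon
    simp only [not_or] at hcon
    obtain ⟨ha, hb, hc, hd⟩ := hcon
    by_cases e0 : ![1,0,0,0,0,0] ∈ W
    · exact htop (stepC hW hl0 hqq hq hd e0)
    · apply hbot
      apply stepA hW hl0 hqq hc
      apply stepB hW hl0 hqq ha hb
      intro x hx
      by_contra hne
      apply e0
      have h3 : 1 + 2*q ≠ 0 := by
        intro h
        have : (3 : ℂ) = 0 := by linear_combination 4 * hqq - (1+2*q) * h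
        norm_num at this
      rw [← W.smul_mem_iff (mul_ne_zero h3 hne), ← DD_chain q l hl0 hqq x]
      exact W.smul_mem _ (DD_mem hW _ (DD_mem hW _ (DD_mem hW _ (DD_mem hW _ hx))))
  · rintro (h | h | h | h)
    · exact case1 q l hl0 hqq h
    · exact case2 q l hl0 hqq h
    · exact case3 q l hl0 hqq h
    · exact case4 q l hl0 hqq h
end
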